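/- Let (S,T) be modular data on Φ, let j = J0 and j' = J'0 be units with associated permutations J, J' of Φ and phases φ_j, φ_{j'} (so S_{Ja,b} = φ_j(b) S_{ab} and S_{J'a,b} = φ_{j'}(b) S_{ab} for all a,b), and let M be a modular invariant. Then M_{J0,J'0} ≤ 1; and if M_{J0,J'0} ≠ 0 then: M_{J0,J'0} = 1; for all c, d ∈ Φ, M_{cd} ≠ 0 implies φ_j(c) = φ_{j'}(d); and M_{Ja,J'b} = M_{ab} for all a, b ∈ Φ. -/

import Mathlib

open scoped BigOperators
open Complex

/-- Modular data on a finite set `Φ` with distinguished element `zero`: a unitary symmetric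
matrix `S`, a diagonal matrix `T` of finite order, with the `zero`-row of `S` real and
strictly positive, `S² = (ST)³`, and nonnegative-integer fusion coefficients `N a b c` given
by Verlinde's formula. -/
structure ModularData (Φ : Type) [Fintype Φ] [DecidableEq Φ] where
  zero : Φ
  S : Matrix Φ Φ ℂ
  T : Matrix Φ Φ ℂ
  N : Φ → Φ → Φ → ℕ
  S_unitary : S * S.conjTranspose = 1
  S_symm : ∀ a b, S a b = S b a
  T_diag : ∀ a b, a ≠ b → T a b = 0
  T_order : ∃ m : ℕ, 0 < m ∧ T ^ m = 1
  S_zero_pos : ∀ a, (S zero a).im = 0 ∧ 0 < (S zero a).re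
  modular_rel : S ^ 2 = (S * T) ^ 3
  verlinde : ∀ a b c,
    (N a b c : ℂ) = ∑ d, S a d * S b d * (starRingEnd ℂ) (S c d) / S zero d

/-- A modular invariant for modular data `(S,T)`: a matrix of nonnegative integers commuting
(after casting to `ℂ`) with `S` and `T`, and with `M 0 0 = 1`. -/
def IsModularInvariant {Φ : Type} [Fintype Φ] [DecidableEq Φ] (M : ModularData Φ)
    (Z : Matrix Φ Φ ℕ) : Prop :=
  (Z.map (fun n => (n : ℂ))) * M.S = M.S * (Z.map (fun n => (n : ℂ))) ∧
  (Z.map (fun n => (n : ℂ))) * M.T = M.T * (Z.map (fun n => (n : ℂ))) ∧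
  Z M.zero M.zero = 1

/-!
Since `Z` commutes with the unitary matrix `S`, each entry `Z a b` is the double sum
`∑ S a c * Z c d * conj (S b d)`. Replacing `(a, b)` by `(J a, J' b)` multiplies the `(c, d)` term
by `φ c * conj (φ' d)`, which has modulus one. At `a = b = 0` all terms are nonnegative and add up
to `1`, so the triangle inequality bounds `Z (J 0) (J' 0)` by `1`, and equality in it forces the
factor to be `1` wherever `Z c d ≠ 0`; the double sum is then unchanged for every `a` and `b`.
-/

section PhasePermutations

open scoped ComplexOrder Matrix

variable {𝕜 : Type*} [RCLike 𝕜]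

section TriangleInequality

variable {α : Type*} {s : Finset α} {z w : α → 𝕜}

theorem ofReal_sum_norm_of_nonneg (hw : ∀ i ∈ s, 0 ≤ w i) :
    ((∑ i ∈ s, ‖w i‖ : ℝ) : 𝕜) = ∑ i ∈ s, w i := by
  rw [RCLike.ofReal_sum]
  exact Finset.sum_congr rfl fun i hi => RCLike.norm_of_nonneg' (hw i hi)

theorem norm_sum_le_norm_sum_of_nonneg (hw : ∀ i ∈ s, 0 ≤ w i) (hz : ∀ i ∈ s, ‖z i‖ ≤ ‖w i‖) :
    ‖∑ i ∈ s, z i‖ ≤ ‖∑ i ∈ s, w i‖ :=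
  calc ‖∑ i ∈ s, z i‖ ≤ ∑ i ∈ s, ‖w i‖ := norm_sum_le_of_le s hz
    _ = ‖∑ i ∈ s, w i‖ := by
      rw [← ofReal_sum_norm_of_nonneg hw,
        RCLike.norm_of_nonneg (Finset.sum_nonneg fun i _ => norm_nonneg (w i))]

theorem eq_of_sum_eq_sum_of_norm_le (hw : ∀ i ∈ s, 0 ≤ w i) (hz : ∀ i ∈ s, ‖z i‖ ≤ ‖w i‖)
    (hsum : ∑ i ∈ s, z i = ∑ i ∈ s, w i) : ∀ i ∈ s, z i = w i := by
  have sum_re : ∑ i ∈ s, RCLike.re (z i) = ∑ i ∈ s, ‖w i‖ := by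
    rw [← map_sum, hsum, ← ofReal_sum_norm_of_nonneg hw, RCLike.ofReal_re]
  have re_eq : ∀ i ∈ s, RCLike.re (z i) = ‖w i‖ :=
    (Finset.sum_eq_sum_iff_of_le fun i hi => (RCLike.re_le_norm (z i)).trans (hz i hi)).1 sum_re
  intro i hi
  calc z i = (RCLike.re (z i) : 𝕜) :=
        (RCLike.re_eq_self_of_le ((hz i hi).trans_eq (re_eq i hi).symm)).symm
    _ = (‖w i‖ : 𝕜) := by rw [re_eq i hi]
    _ = w i := RCLike.norm_of_nonneg' (hw i hi)

end TriangleInequality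

section Unitary

variable {ι : Type*} [Fintype ι] [DecidableEq ι] {U : Matrix ι ι 𝕜}

theorem sum_norm_sq_col_of_mem_unitaryGroup (hU : U ∈ Matrix.unitaryGroup ι 𝕜) (b : ι) :
    ∑ a, ‖U a b‖ ^ 2 = 1 := by
  have diag : (Uᴴ * U) b b = 1 := by
    rw [← Matrix.star_eq_conjTranspose, Matrix.mem_unitaryGroup_iff'.1 hU, Matrix.one_apply_eq]
  simp only [Matrix.mul_apply, Matrix.conjTranspose_apply, ← starRingEnd_apply,
    RCLike.conj_mul] at diag
  exact_mod_cast diag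

theorem norm_phase_eq_one (hU : U ∈ Matrix.unitaryGroup ι 𝕜) (J : Equiv.Perm ι) {φ : ι → 𝕜}
    (hφ : ∀ a b, U (J a) b = φ b * U a b) (b : ι) : ‖φ b‖ = 1 := by
  have sq_eq_one : ‖φ b‖ ^ 2 = 1 := calc
    ‖φ b‖ ^ 2 = ∑ a, ‖φ b * U a b‖ ^ 2 := by
      simp only [norm_mul, mul_pow, ← Finset.mul_sum, sum_norm_sq_col_of_mem_unitaryGroup hU,
        mul_one]
    _ = ∑ a, ‖U (J a) b‖ ^ 2 := by simp only [hφ]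
    _ = ∑ a, ‖U a b‖ ^ 2 := Equiv.sum_comp J fun a => ‖U a b‖ ^ 2
    _ = 1 := sum_norm_sq_col_of_mem_unitaryGroup hU b
  exact (pow_eq_one_iff_of_nonneg (norm_nonneg _) two_ne_zero).1 sq_eq_one

end Unitary

section Intertwiner

variable {ι κ : Type*} {a j : ι} {b j' : κ} {φ : ι → 𝕜} {φ' : κ → 𝕜}
  {S : Matrix ι ι 𝕜} {S' : Matrix κ κ 𝕜} {A : Matrix ι κ 𝕜}

/-- The term indexed by `x = (c, d)` in the double sum for `(S * A * S'ᴴ) a b`, which computes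
`A a b` when `A` intertwines `S` and the unitary `S'`. -/
def conjugationTerm (S : Matrix ι ι 𝕜) (S' : Matrix κ κ 𝕜) (A : Matrix ι κ 𝕜) (a : ι) (b : κ)
    (x : ι × κ) : 𝕜 :=
  S a x.1 * A x.1 x.2 * star (S' b x.2)

theorem conjugationTerm_of_phase (hj : ∀ c, S j c = φ c * S a c)
    (hj' : ∀ d, S' j' d = φ' d * S' b d) (x : ι × κ) :
    conjugationTerm S S' A j j' x = φ x.1 * star (φ' x.2) * conjugationTerm S S' A a b x := by
  simp only [conjugationTerm, hj, hj', star_mul]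
  ring

theorem norm_conjugationTerm_of_phase (hφ : ∀ c, ‖φ c‖ = 1) (hφ' : ∀ d, ‖φ' d‖ = 1)
    (hj : ∀ c, S j c = φ c * S a c) (hj' : ∀ d, S' j' d = φ' d * S' b d) (x : ι × κ) :
    ‖conjugationTerm S S' A j j' x‖ = ‖conjugationTerm S S' A a b x‖ := by
  simp only [conjugationTerm_of_phase hj hj', norm_mul, norm_star, hφ, hφ', one_mul]

theorem conjugationTerm_nonneg (hA : ∀ c d, 0 ≤ A c d) (ha : ∀ c, 0 ≤ S a c)
    (hb : ∀ d, 0 ≤ S' b d) (x : ι × κ) : 0 ≤ conjugationTerm S S' A a b x :=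
  mul_nonneg (mul_nonneg (ha _) (hA _ _)) (star_nonneg_iff.2 (hb _))

variable [Fintype ι] [Fintype κ] [DecidableEq κ]

theorem sum_conjugationTerm (hS' : S' ∈ Matrix.unitaryGroup κ 𝕜) (hA : A * S' = S * A)
    (a : ι) (b : κ) : ∑ x, conjugationTerm S S' A a b x = A a b := by
  have conj_eq : S * A * S'ᴴ = A := by
    rw [← hA, Matrix.mul_assoc, ← Matrix.star_eq_conjTranspose, Matrix.mem_unitaryGroup_iff.1 hS',
      Matrix.mul_one]
  have entry := congrFun₂ conj_eq a b
  simp only [Matrix.mul_apply, Matrix.conjTranspose_apply, Finset.sum_mul] at entry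
  rw [← entry, Fintype.sum_prod_type_right]
  rfl

theorem norm_apply_le_of_phase (hS' : S' ∈ Matrix.unitaryGroup κ 𝕜) (hAS : A * S' = S * A)
    (hA : ∀ c d, 0 ≤ A c d) (ha : ∀ c, 0 ≤ S a c) (hb : ∀ d, 0 ≤ S' b d)
    (hφ : ∀ c, ‖φ c‖ = 1) (hφ' : ∀ d, ‖φ' d‖ = 1)
    (hj : ∀ c, S j c = φ c * S a c) (hj' : ∀ d, S' j' d = φ' d * S' b d) :
    ‖A j j'‖ ≤ ‖A a b‖ := by
  rw [← sum_conjugationTerm hS' hAS j j', ← sum_conjugationTerm hS' hAS a b]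
  exact norm_sum_le_norm_sum_of_nonneg (fun x _ => conjugationTerm_nonneg hA ha hb x)
    fun x _ => (norm_conjugationTerm_of_phase hφ hφ' hj hj' x).le

theorem phase_eq_of_apply_eq (hS' : S' ∈ Matrix.unitaryGroup κ 𝕜) (hAS : A * S' = S * A)
    (hA : ∀ c d, 0 ≤ A c d) (ha : ∀ c, 0 < S a c) (hb : ∀ d, 0 < S' b d)
    (hφ : ∀ c, ‖φ c‖ = 1) (hφ' : ∀ d, ‖φ' d‖ = 1)
    (hj : ∀ c, S j c = φ c * S a c) (hj' : ∀ d, S' j' d = φ' d * S' b d)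
    (heq : A j j' = A a b) {c : ι} {d : κ} (hcd : A c d ≠ 0) : φ c = φ' d := by
  have terms_eq : conjugationTerm S S' A j j' (c, d) = conjugationTerm S S' A a b (c, d) := by
    refine eq_of_sum_eq_sum_of_norm_le
      (fun x _ => conjugationTerm_nonneg hA (fun c => (ha c).le) (fun d => (hb d).le) x)
      (fun x _ => (norm_conjugationTerm_of_phase hφ hφ' hj hj' x).le) ?_ _ (Finset.mem_univ _)
    rw [sum_conjugationTerm hS' hAS, sum_conjugationTerm hS' hAS, heq]
  have term_ne_zero : conjugationTerm S S' A a b (c, d) ≠ 0 :=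
    mul_ne_zero (mul_ne_zero (ha c).ne' hcd) (star_ne_zero.2 (hb d).ne')
  have phase_mul : φ c * star (φ' d) = 1 := by
    rw [conjugationTerm_of_phase hj hj'] at terms_eq
    exact (mul_eq_right₀ term_ne_zero).1 terms_eq
  rw [← starRingEnd_apply, ← RCLike.inv_eq_conj (hφ' d)] at phase_mul
  exact eq_of_mul_inv_eq_one phase_mul

theorem apply_eq_of_phase_eq (hS' : S' ∈ Matrix.unitaryGroup κ 𝕜) (hAS : A * S' = S * A)
    (hφ' : ∀ d, ‖φ' d‖ = 1)
    (hj : ∀ c, S j c = φ c * S a c) (hj' : ∀ d, S' j' d = φ' d * S' b d)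
    (hphase : ∀ c d, A c d ≠ 0 → φ c = φ' d) : A j j' = A a b := by
  rw [← sum_conjugationTerm hS' hAS j j', ← sum_conjugationTerm hS' hAS a b]
  refine Finset.sum_congr rfl fun ⟨c, d⟩ _ => ?_
  by_cases hcd : A c d = 0
  · simp only [conjugationTerm, hcd, mul_zero, zero_mul]
  · have phase_mul : φ c * star (φ' d) = 1 := by
      rw [hphase c d hcd, ← starRingEnd_apply, RCLike.mul_conj, hφ' d, RCLike.ofReal_one, one_pow]
    rw [conjugationTerm_of_phase hj hj', phase_mul, one_mul]

end Intertwiner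

theorem modularData_simple_current_invariant_general {ι κ : Type*} [Fintype ι] [DecidableEq ι]
    [Fintype κ] [DecidableEq κ] {S : Matrix ι ι 𝕜} {S' : Matrix κ κ 𝕜}
    (hS : S ∈ Matrix.unitaryGroup ι 𝕜) (hS' : S' ∈ Matrix.unitaryGroup κ 𝕜)
    {o : ι} {o' : κ} (ho : ∀ c, 0 < S o c) (ho' : ∀ d, 0 < S' o' d)
    (J : Equiv.Perm ι) (J' : Equiv.Perm κ) {φ : ι → 𝕜} {φ' : κ → 𝕜}
    (hφ : ∀ a b, S (J a) b = φ b * S a b) (hφ' : ∀ a b, S' (J' a) b = φ' b * S' a b)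
    {Z : Matrix ι κ ℕ} (hZS : Z.map (fun n => (n : 𝕜)) * S' = S * Z.map (fun n => (n : 𝕜)))
    (hZ : Z o o' = 1) :
    Z (J o) (J' o') ≤ 1 ∧
    (Z (J o) (J' o') ≠ 0 →
      Z (J o) (J' o') = 1 ∧
      (∀ c d, Z c d ≠ 0 → φ c = φ' d) ∧
      (∀ a b, Z (J a) (J' b) = Z a b)) := by
  have norm_φ := norm_phase_eq_one hS J hφ
  have norm_φ' := norm_phase_eq_one hS' J' hφ'
  have entry_nonneg : ∀ c d, 0 ≤ Z.map (fun n => (n : 𝕜)) c d := fun c d => Nat.cast_nonneg (Z c d)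
  have entry_le_one : Z (J o) (J' o') ≤ 1 := by
    simpa [hZ] using norm_apply_le_of_phase hS' hZS entry_nonneg (fun c => (ho c).le)
      (fun d => (ho' d).le) norm_φ norm_φ' (hφ o) (hφ' o')
  refine ⟨entry_le_one, fun entry_ne_zero => ?_⟩
  have entry_eq_one : Z (J o) (J' o') = 1 := by omega
  have phase_eq : ∀ c d, Z.map (fun n => (n : 𝕜)) c d ≠ 0 → φ c = φ' d := fun c d =>
    phase_eq_of_apply_eq hS' hZS entry_nonneg ho ho' norm_φ norm_φ' (hφ o) (hφ' o')
      (by rw [Matrix.map_apply, Matrix.map_apply, entry_eq_one, hZ])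
  refine ⟨entry_eq_one, fun c d hcd => phase_eq c d (Nat.cast_ne_zero.2 hcd), fun a b => ?_⟩
  exact Nat.cast_injective (R := 𝕜) <|
    apply_eq_of_phase_eq (A := Z.map fun n => (n : 𝕜)) hS' hZS norm_φ' (hφ a) (hφ' b) phase_eq

end PhasePermutations

namespace ModularData

open scoped ComplexOrder

variable {Φ : Type} [Fintype Φ] [DecidableEq Φ] (M : ModularData Φ)

theorem S_mem_unitaryGroup : M.S ∈ Matrix.unitaryGroup Φ ℂ :=
  Matrix.mem_unitaryGroup_iff.2 M.S_unitary

theorem S_zero_apply_pos (a : Φ) : 0 < M.S M.zero a :=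
  Complex.pos_iff.2 ⟨(M.S_zero_pos a).2, (M.S_zero_pos a).1.symm⟩

end ModularData

/-- Let `j = J 0` and `j' = J' 0` be units with associated permutations and
phases, and let `Z` be a modular invariant. Then `Z_{J0,J'0} ≤ 1`, and if `Z_{J0,J'0} ≠ 0`
then `Z_{J0,J'0} = 1`, `Z_{cd} ≠ 0` implies `φ_j(c) = φ_{j'}(d)`, and
`Z_{Ja,J'b} = Z_{ab}` for all `a, b`. -/
theorem modularData_simple_current_invariant
    {Φ : Type} [Fintype Φ] [DecidableEq Φ] (M : ModularData Φ)
    (j j' : Φ)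
    (hj : M.S j M.zero = M.S M.zero M.zero) (hj' : M.S j' M.zero = M.S M.zero M.zero)
    (J J' : Equiv.Perm Φ) (hJ0 : J M.zero = j) (hJ'0 : J' M.zero = j')
    (φ φ' : Φ → ℂ)
    (hφ : ∀ a b, M.S (J a) b = φ b * M.S a b)
    (hφ' : ∀ a b, M.S (J' a) b = φ' b * M.S a b)
    (Z : Matrix Φ Φ ℕ) (hZ : IsModularInvariant M Z) :
    Z (J M.zero) (J' M.zero) ≤ 1 ∧
    (Z (J M.zero) (J' M.zero) ≠ 0 →
      Z (J M.zero) (J' M.zero) = 1 ∧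
      (∀ c d, Z c d ≠ 0 → φ c = φ' d) ∧
      (∀ a b, Z (J a) (J' b) = Z a b)) := by
  exact modularData_simple_current_invariant_general M.S_mem_unitaryGroup M.S_mem_unitaryGroup
    M.S_zero_apply_pos M.S_zero_apply_pos J J' hφ hφ' hZ.1 hZ.2.2
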